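/- Suppose the feasible allocation x satisfies the Nashian Greedy condition and the valuations have unit monopolist utilities. Let p < 0, let x* be a feasible allocation with U*_a = ∫_0^T v a s · x*_a s ds > 0 for every agent a, and let W = ((1/n) ∑_a (U*_a)^p)^{1/p}. For β > 0 let B_β = {a : U a T ≤ β·W}. Then |B_β| / n ≤ (β · log(n+1))^{|p|/(|p|+1)}. -/

import Mathlib

/-!
Write `L = log (n + 1)`. At almost every time `s`, the greedy rule spends the whole unit of resource
on agents maximizing `v a s / U a s`, so that maximum equals `∑ a, x a s * v a s / U a s`, which is
the derivative of `∑ a, log (U a s)`. Since each `U a` is nondecreasing, any feasible `xstar`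
satisfies, pointwise in `s`,
`∑ a, v a s * xstar a s / U a T ≤ ∑ a, v a s * x a s / U a s`.
Integrating, and using `U a 0 = 1 / n` and `U a T ≤ 1 / n + 1`, gives the competitive bound
`∑ a, Ustar a / U a T ≤ n * L` (`sum_pointwise_le`, `integral_div_le_log`).

Restricting this sum to the set `B` of agents with `U a T ≤ β * W` yields
`∑ a ∈ B, Ustar a ≤ β * W * n * L`. With `q = -p`, Hölder's inequality applied to
`1 = Ustar a ^ (q / (q + 1)) * Ustar a ^ (-q / (q + 1))` bounds `|B|` by
`(β * W * n * L) ^ (q / (q + 1)) * (n * W ^ (-q)) ^ (1 / (q + 1)) = n * (β * L) ^ (q / (q + 1))`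
(`card_le_of_sum_le`).
-/

open MeasureTheory Real

/-- The logarithmic-derivative estimate for `F t = c + ∫ 0..t, f`. As `log ∘ F` is monotone, the
integral of its derivative is at most its increment; the Lebesgue differentiation theorem
identifies that derivative almost everywhere with `f / F`. -/
lemma integral_div_le_log {f F : ℝ → ℝ} {c T : ℝ} (hT : 0 < T) (hc : 0 < c)
    (hf : IntervalIntegrable f volume 0 T) (hF : ∀ t, F t = c + ∫ s in (0:ℝ)..t, f s)
    (hmono : MonotoneOn F (Set.Icc 0 T)) :
    IntervalIntegrable (fun s => f s / F s) volume 0 T ∧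
      ∫ s in (0:ℝ)..T, f s / F s ≤ log (F T / c) := by
  have hF0 : F 0 = c := by simp [hF]
  have hpos : ∀ t ∈ Set.Icc 0 T, 0 < F t := fun t ht => by
    have := hmono ⟨le_rfl, hT.le⟩ ht ht.1
    linarith
  have hlog : MonotoneOn (fun t => log (F t)) (Set.uIcc 0 T) := by
    rw [Set.uIcc_of_le hT.le]
    intro a ha b hb hab
    exact log_le_log (hpos a ha) (hmono ha hb hab)
  have hae : ∀ᵐ t, t ∈ Set.uIoc 0 T → deriv (fun t => log (F t)) t = f t / F t := by
    filter_upwards [hf.ae_hasDerivAt_integral] with t ht htm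
    have htm' := Set.uIoc_subset_uIcc htm
    have h1 := (ht htm' 0 (by simp)).const_add c
    have h2 : HasDerivAt F (f t) t := by
      have : F = fun t => c + ∫ s in (0:ℝ)..t, f s := funext hF
      rw [this]; exact h1
    rw [Set.uIcc_of_le hT.le] at htm'
    exact (h2.log (hpos t htm').ne').deriv
  refine ⟨hlog.intervalIntegrable_deriv.congr_ae ?_, ?_⟩
  · exact (ae_restrict_iff' measurableSet_uIoc).2 hae
  · rw [← intervalIntegral.integral_congr_ae hae]
    have h := hlog.intervalIntegral_deriv_mem_uIcc
    have h0 : log (F 0) ≤ log (F T) := hlog (by simp) (by simp) hT.le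
    rw [Set.uIcc_of_le (by linarith)] at h
    rw [log_div (hpos T ⟨hT.le, le_rfl⟩).ne' hc.ne']
    have := h.2
    rw [hF0] at this
    exact this

/-- The greedy rule at a fixed time: `v`, `x`, `y`, `u` are the values at that time of the
valuations, the greedy allocation, the competing allocation and the current utilities, and `uT`
are the final utilities. -/
lemma sum_pointwise_le {n : ℕ} (v x y u uT : Fin n → ℝ)
    (hv : ∀ a, 0 ≤ v a) (hx : ∀ a, 0 ≤ x a) (hx1 : ∑ a, x a = 1)
    (hy : ∀ a, 0 ≤ y a) (hy1 : ∑ a, y a ≤ 1) (hu : ∀ a, 0 < u a) (huT : ∀ a, u a ≤ uT a)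
    (hg : ∀ a b, 0 < x a → v a * u b ≥ v b * u a) :
    ∑ a, v a * y a / uT a ≤ ∑ a, v a * x a / u a := by
  set l := ∑ a, v a * x a / u a with hl
  have hl0 : 0 ≤ l := Finset.sum_nonneg fun a _ =>
    div_nonneg (mul_nonneg (hv a) (hx a)) (hu a).le
  have key : ∀ b, v b / u b ≤ l := fun b => by
    calc v b / u b = ∑ a, x a * (v b / u b) := by rw [← Finset.sum_mul, hx1, one_mul]
      _ ≤ l := Finset.sum_le_sum fun a _ => by
        rcases (hx a).eq_or_lt with h | h
        · simp [← h]
        · have : v b / u b ≤ v a / u a := by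
            rw [div_le_div_iff₀ (hu b) (hu a)]
            exact hg a b h
          calc x a * (v b / u b) ≤ x a * (v a / u a) := mul_le_mul_of_nonneg_left this h.le
            _ = v a * x a / u a := by ring
  calc ∑ a, v a * y a / uT a ≤ ∑ a, y a * l := Finset.sum_le_sum fun a _ => by
        calc v a * y a / uT a ≤ v a * y a / u a :=
              div_le_div_of_nonneg_left (mul_nonneg (hv a) (hy a)) (hu a) (huT a)
          _ = y a * (v a / u a) := by ring
          _ ≤ y a * l := mul_le_mul_of_nonneg_left (key a) (hy a)
    _ = (∑ a, y a) * l := by rw [Finset.sum_mul]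
    _ ≤ 1 * l := mul_le_mul_of_nonneg_right hy1 hl0
    _ = l := one_mul l

/-- The Hölder step: a set whose total `∑ z` is small compared with the `(-q)`-mean `W` of `z`
has few elements. Here `N` is the normalizing constant of the mean and `C` the ratio. -/
lemma card_le_of_sum_le {ι : Type*} (B : Finset ι) (z : ι → ℝ) {q W N C : ℝ} (hq : 0 < q)
    (hW : 0 < W) (hN : 0 < N) (hC : 0 < C) (hz : ∀ a ∈ B, 0 < z a)
    (h1 : ∑ a ∈ B, z a ≤ C * W * N) (h2 : ∑ a ∈ B, z a ^ (-q) ≤ N * W ^ (-q)) :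
    (B.card : ℝ) / N ≤ C ^ (q / (q + 1)) := by
  have hq1 : 0 < q + 1 := by linarith
  have hpq : HolderConjugate ((q + 1) / q) (q + 1) := by
    rw [Real.holderConjugate_iff]
    refine ⟨by rw [lt_div_iff₀ hq]; linarith, ?_⟩
    field_simp
  have H := inner_le_Lp_mul_Lq_of_nonneg B (f := fun a => z a ^ (q / (q + 1)))
    (g := fun a => z a ^ (-q / (q + 1))) hpq
    (fun a ha => rpow_nonneg (hz a ha).le _) (fun a ha => rpow_nonneg (hz a ha).le _)
  have e1 : ∑ a ∈ B, z a ^ (q / (q + 1)) * z a ^ (-q / (q + 1)) = B.card := by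
    rw [Finset.sum_congr rfl (g := fun _ => (1:ℝ))]
    · simp
    · intro a ha
      rw [← rpow_add (hz a ha), show q / (q + 1) + -q / (q + 1) = 0 by ring, rpow_zero]
  have e2 : ∑ a ∈ B, (z a ^ (q / (q + 1))) ^ ((q + 1) / q) = ∑ a ∈ B, z a :=
    Finset.sum_congr rfl fun a ha => by
      rw [← rpow_mul (hz a ha).le, show q / (q + 1) * ((q + 1) / q) = 1 by field_simp, rpow_one]
  have e3 : ∑ a ∈ B, (z a ^ (-q / (q + 1))) ^ (q + 1) = ∑ a ∈ B, z a ^ (-q) :=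
    Finset.sum_congr rfl fun a ha => by
      rw [← rpow_mul (hz a ha).le, show -q / (q + 1) * (q + 1) = -q by field_simp]
  rw [e1, e2, e3, one_div_div] at H
  have hs1 : 0 ≤ ∑ a ∈ B, z a := Finset.sum_nonneg fun a ha => (hz a ha).le
  have hs2 : 0 ≤ ∑ a ∈ B, z a ^ (-q) := Finset.sum_nonneg fun a ha => rpow_nonneg (hz a ha).le _
  rw [div_le_iff₀ hN]
  calc (B.card : ℝ) ≤ (C * W * N) ^ (q / (q + 1)) * (N * W ^ (-q)) ^ (1 / (q + 1)) :=
        H.trans (mul_le_mul (rpow_le_rpow hs1 h1 (by positivity))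
          (rpow_le_rpow hs2 h2 (by positivity)) (by positivity) (by positivity))
    _ = C ^ (q / (q + 1)) * (W ^ (q / (q + 1)) * W ^ (-q * (1 / (q + 1)))) *
          (N ^ (q / (q + 1)) * N ^ (1 / (q + 1))) := by
        rw [mul_rpow (by positivity) hN.le, mul_rpow hC.le hW.le,
          mul_rpow hN.le (by positivity), ← rpow_mul hW.le]
        ring
    _ = C ^ (q / (q + 1)) * N := by
        rw [← rpow_add hW, ← rpow_add hN,
          show q / (q + 1) + -q * (1 / (q + 1)) = 0 by ring,
          show q / (q + 1) + 1 / (q + 1) = 1 by field_simp, rpow_zero, rpow_one, mul_one]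

/-- A valuation weighted by an allocation share in `[0, 1]` is integrable. -/
lemma intervalIntegrable_mul_share {v x : ℝ → ℝ} {T : ℝ} (hT : 0 < T)
    (hv : IntegrableOn v (Set.Icc 0 T)) (hx : Measurable x)
    (hx01 : ∀ᵐ s ∂(volume.restrict (Set.Icc (0:ℝ) T)), 0 ≤ x s ∧ x s ≤ 1) :
    IntervalIntegrable (fun s => v s * x s) volume 0 T := by
  rw [intervalIntegrable_iff_integrableOn_Icc_of_le hT.le]
  refine Integrable.mono hv (hv.aestronglyMeasurable.mul hx.aestronglyMeasurable) ?_
  filter_upwards [hx01] with s hs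
  rw [norm_mul, Real.norm_of_nonneg hs.1]
  exact mul_le_of_le_one_right (norm_nonneg _) hs.2

theorem stmt_6
    (n : ℕ) (hn : 1 ≤ n) (T : ℝ) (hT : 0 < T)
    (v : Fin n → ℝ → ℝ)
    (hv_meas : ∀ a, Measurable (v a))
    (hv_nonneg : ∀ a, ∀ᵐ s ∂(volume.restrict (Set.Icc (0:ℝ) T)), 0 ≤ v a s)
    (hv_int : ∀ a, IntegrableOn (v a) (Set.Icc (0:ℝ) T))
    (hv_unit : ∀ a, ∫ s in (0:ℝ)..T, v a s = 1)
    (x : Fin n → ℝ → ℝ)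
    (hx_meas : ∀ a, Measurable (x a))
    (hx_feas : ∀ᵐ s ∂(volume.restrict (Set.Icc (0:ℝ) T)),
      (∀ a, 0 ≤ x a s) ∧ ∑ a, x a s ≤ 1)
    (U : Fin n → ℝ → ℝ)
    (hU : ∀ a t, U a t = 1 / (n : ℝ) + ∫ s in (0:ℝ)..t, v a s * x a s)
    (hgreedy : ∀ᵐ s ∂(volume.restrict (Set.Icc (0:ℝ) T)),
      (∑ a, x a s = 1) ∧
      ∀ a b, 0 < x a s → v a s * U b s ≥ v b s * U a s)
    (p : ℝ) (hp : p < 0)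
    (xstar : Fin n → ℝ → ℝ)
    (hxstar_meas : ∀ a, Measurable (xstar a))
    (hxstar_feas : ∀ᵐ s ∂(volume.restrict (Set.Icc (0:ℝ) T)),
      (∀ a, 0 ≤ xstar a s) ∧ ∑ a, xstar a s ≤ 1)
    (Ustar : Fin n → ℝ)
    (hUstar : ∀ a, Ustar a = ∫ s in (0:ℝ)..T, v a s * xstar a s)
    (hUstar_pos : ∀ a, 0 < Ustar a)
    (W : ℝ) (hW : W = ((1 / (n : ℝ)) * ∑ a, (Ustar a) ^ p) ^ (1 / p))
    (β : ℝ) (hβ : 0 < β) :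
    ({a : Fin n | U a T ≤ β * W}.ncard : ℝ) / (n : ℝ) ≤
      (β * Real.log ((n : ℝ) + 1)) ^ (|p| / (|p| + 1)) := by
  have hn0 : (0:ℝ) < n := by exact_mod_cast hn
  have hc : (0:ℝ) < 1 / n := by positivity
  have share : ∀ y : Fin n → ℝ → ℝ,
      (∀ᵐ s ∂(volume.restrict (Set.Icc (0:ℝ) T)), (∀ a, 0 ≤ y a s) ∧ ∑ a, y a s ≤ 1) →
      ∀ a, ∀ᵐ s ∂(volume.restrict (Set.Icc (0:ℝ) T)), 0 ≤ y a s ∧ y a s ≤ 1 := by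
    intro y hy a
    filter_upwards [hy] with s hs
    exact ⟨hs.1 a, (Finset.single_le_sum (fun b _ => hs.1 b) (Finset.mem_univ a)).trans hs.2⟩
  have hvx : ∀ a, IntervalIntegrable (fun s => v a s * x a s) volume 0 T := fun a =>
    intervalIntegrable_mul_share hT (hv_int a) (hx_meas a) (share x hx_feas a)
  have hvy : ∀ a, IntervalIntegrable (fun s => v a s * xstar a s) volume 0 T := fun a =>
    intervalIntegrable_mul_share hT (hv_int a) (hxstar_meas a) (share xstar hxstar_feas a)
  have hvi : ∀ a, IntervalIntegrable (v a) volume 0 T := fun a =>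
    (intervalIntegrable_iff_integrableOn_Icc_of_le hT.le).2 (hv_int a)
  have hvx0 : ∀ a, ∀ᵐ s ∂(volume.restrict (Set.Icc (0:ℝ) T)), 0 ≤ v a s * x a s := fun a => by
    filter_upwards [hv_nonneg a, share x hx_feas a] with s h1 h2
    exact mul_nonneg h1 h2.1
  have hmono : ∀ a, MonotoneOn (U a) (Set.Icc 0 T) := by
    intro a s hs t ht hst
    rw [hU, hU]
    have hsub : Set.Ioc 0 t ⊆ Set.Icc 0 T := fun r hr => ⟨hr.1.le, hr.2.trans ht.2⟩
    have := intervalIntegral.integral_mono_interval (μ := volume) le_rfl hs.1 hst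
      (ae_restrict_of_ae_restrict_of_subset hsub (hvx0 a))
      ((hvx a).mono_set (by
        rw [Set.uIcc_of_le ht.1, Set.uIcc_of_le hT.le]
        exact Set.Icc_subset_Icc le_rfl ht.2))
    linarith
  have hU0 : ∀ a, U a 0 = 1 / n := fun a => by simp [hU]
  have hUpos : ∀ a, ∀ t ∈ Set.Icc 0 T, 0 < U a t := fun a t ht => by
    have := hmono a ⟨le_rfl, hT.le⟩ ht ht.1
    rw [hU0] at this
    linarith
  have hTm : T ∈ Set.Icc 0 T := ⟨hT.le, le_rfl⟩
  have hUT : ∀ a, U a T ≤ 1 / n + 1 := fun a => by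
    rw [hU, ← hv_unit a]
    have := intervalIntegral.integral_mono_ae_restrict hT.le (hvx a) (hvi a) (by
      filter_upwards [hv_nonneg a, share x hx_feas a] with s h1 h2
      exact mul_le_of_le_one_right h1 h2.2)
    linarith
  have hlog := fun a => integral_div_le_log hT hc (hvx a) (hU a) (hmono a)
  have hpt : ∀ᵐ s ∂(volume.restrict (Set.Icc (0:ℝ) T)),
      ∑ a, v a s * xstar a s / U a T ≤ ∑ a, v a s * x a s / U a s := by
    filter_upwards [ae_all_iff.2 hv_nonneg, hx_feas, hxstar_feas, hgreedy,
      ae_restrict_mem measurableSet_Icc] with s h1 h2 h3 h4 hs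
    exact sum_pointwise_le (fun a => v a s) (fun a => x a s) (fun a => xstar a s)
      (fun a => U a s) (fun a => U a T) h1 h2.1 h4.1 h3.1 h3.2 (fun a => hUpos a s hs)
      (fun a => hmono a hs hTm hs.2) h4.2
  have hcomp : ∑ a, Ustar a / U a T ≤ n * log ((n:ℝ) + 1) := by
    calc ∑ a, Ustar a / U a T = ∫ s in (0:ℝ)..T, ∑ a, v a s * xstar a s / U a T := by
          rw [intervalIntegral.integral_finsetSum fun a _ => (hvy a).div_const _]
          exact Finset.sum_congr rfl fun a _ => by
            rw [intervalIntegral.integral_div, hUstar]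
      _ ≤ ∫ s in (0:ℝ)..T, ∑ a, v a s * x a s / U a s :=
          intervalIntegral.integral_mono_ae_restrict hT.le
            (by simpa only [Finset.sum_fn] using! IntervalIntegrable.sum _ fun a _ => (hvy a).div_const _)
            (by simpa only [Finset.sum_fn] using! IntervalIntegrable.sum _ fun a _ => (hlog a).1) hpt
      _ = ∑ a, ∫ s in (0:ℝ)..T, v a s * x a s / U a s :=
          intervalIntegral.integral_finsetSum fun a _ => (hlog a).1
      _ ≤ ∑ _a : Fin n, log ((n:ℝ) + 1) := Finset.sum_le_sum fun a _ => by
          refine (hlog a).2.trans (log_le_log (div_pos (hUpos a T hTm) hc) ?_)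
          rw [div_le_iff₀ hc]
          refine (hUT a).trans (le_of_eq ?_)
          field_simp
          ring
      _ = n * log ((n:ℝ) + 1) := by simp
  have hL : 0 < log ((n:ℝ) + 1) := log_pos (by linarith)
  have hne : Nonempty (Fin n) := ⟨⟨0, hn⟩⟩
  have hS : 0 < ∑ a, Ustar a ^ p :=
    Finset.sum_pos (fun a _ => rpow_pos_of_pos (hUstar_pos a) p) Finset.univ_nonempty
  have hWpos : 0 < W := by rw [hW]; positivity
  have hWp : n * W ^ p = ∑ a, Ustar a ^ p := by
    rw [hW, ← rpow_mul (by positivity), one_div_mul_cancel hp.ne, rpow_one]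
    field_simp
  classical
  have hB : ({a : Fin n | U a T ≤ β * W}.ncard : ℝ) =
      (Finset.univ.filter fun a : Fin n => U a T ≤ β * W).card := by
    rw [← Set.ncard_coe_finset]
    simp
  rw [hB, abs_of_neg hp]
  refine card_le_of_sum_le _ Ustar (q := -p) (W := W) (by linarith) hWpos hn0 (by positivity)
    (fun a _ => hUstar_pos a) ?_ ?_
  · calc ∑ a ∈ Finset.univ.filter (fun a : Fin n => U a T ≤ β * W), Ustar a
        ≤ ∑ a ∈ Finset.univ.filter (fun a : Fin n => U a T ≤ β * W),
            β * W * (Ustar a / U a T) := Finset.sum_le_sum fun a ha => by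
          have hle := (Finset.mem_filter.1 ha).2
          rw [← mul_div_assoc, le_div_iff₀ (hUpos a T hTm), mul_comm]
          exact mul_le_mul_of_nonneg_right hle (hUstar_pos a).le
      _ ≤ ∑ a, β * W * (Ustar a / U a T) :=
          Finset.sum_le_sum_of_subset_of_nonneg (Finset.filter_subset _ _) fun a _ _ =>
            mul_nonneg (by positivity) (div_nonneg (hUstar_pos a).le (hUpos a T hTm).le)
      _ = β * W * ∑ a, Ustar a / U a T := by rw [Finset.mul_sum]
      _ ≤ β * W * (n * log ((n:ℝ) + 1)) := mul_le_mul_of_nonneg_left hcomp (by positivity)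
      _ = β * log ((n:ℝ) + 1) * W * n := by ring
  · rw [neg_neg, hWp]
    exact Finset.sum_le_sum_of_subset_of_nonneg (Finset.filter_subset _ _) fun a _ _ =>
      rpow_nonneg (hUstar_pos a).le _
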